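/- Let Γ be an admissible finite nonempty set of invertible n×n real matrices, let x₀ ∈ ℝⁿ with x₀ ≠ 0, and let Λ* ∈ Γ be a minimizer of x₀ᵀM_Λx₀ over Λ ∈ Γ. Then Ψ(Λ* x₀; S₀) < Ψ(x₀; S₀), where Ψ denotes the gauge (Minkowski functional); equivalently, (Λ* x₀)ᵀM₀(Λ* x₀) < x₀ᵀM₀x₀. -/

import Mathlib

open Matrix Set Filter Topology Pointwise

noncomputable section

/-- The quadratic form `xᵀ M x`. -/
def quadForm {n : ℕ} (M : Matrix (Fin n) (Fin n) ℝ) (x : Fin n → ℝ) : ℝ :=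
  x ⬝ᵥ M.mulVec x

/-- The ellipsoid `{x : xᵀ M x ≤ 1}`. -/
def ellipsoid {n : ℕ} (M : Matrix (Fin n) (Fin n) ℝ) : Set (Fin n → ℝ) :=
  {x | quadForm M x ≤ 1}

/-- `S*_Γ = ⋃_{Λ ∈ Γ} S_Λ` where `S_Λ = {x : xᵀ (ΛᵀM₀Λ) x ≤ 1}`. -/
def SStar {n : ℕ} (M₀ : Matrix (Fin n) (Fin n) ℝ)
    (Γ : Finset (Matrix (Fin n) (Fin n) ℝ)) : Set (Fin n → ℝ) :=
  ⋃ Λ ∈ Γ, ellipsoid (Λᵀ * M₀ * Λ)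

/-- The gauge (Minkowski functional) `Ψ(x;S) = inf {α : α ≥ 0 ∧ x ∈ α • S}`. -/
def gaugeFn {n : ℕ} (S : Set (Fin n → ℝ)) (x : Fin n → ℝ) : ℝ :=
  sInf {α : ℝ | 0 ≤ α ∧ x ∈ α • S}

/-!
Since `S₀` is closed, the rescaled point `Ψ(x₀)⁻¹ • x₀` lies in `S₀`, hence in the interior of
`⋃ Λ, Λ⁻¹(S₀)`. Pushing it outward by some factor `t > 1` keeps it in one of the sets `Λ⁻¹(S₀)`,
which says that `Ψ(Λ x₀) ≤ Ψ(x₀) / t < Ψ(x₀)` for that `Λ`. On an ellipsoid the gauge is the square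
root of the quadratic form, so the minimizer `Λ*` does at least as well.
-/

section Gauge

variable {E F : Type*} [AddCommGroup E] [Module ℝ E] [TopologicalSpace E] [ContinuousSMul ℝ E]
  [AddCommGroup F] [Module ℝ F]

lemma inv_gauge_smul_mem {S : Set E} (hS : IsClosed S) {x : E} (hx : 0 < gauge S x) :
    (gauge S x)⁻¹ • x ∈ S := by
  set A : Set ℝ := {r ∈ Ioi 0 | r⁻¹ • x ∈ S}
  have gauge_eq : gauge S x = sInf A := gauge_def'
  have A_nonempty : A.Nonempty := by
    by_contra hA
    rw [gauge_eq, not_nonempty_iff_eq_empty.1 hA, Real.sInf_empty] at hx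
    exact hx.false
  have gauge_mem_closure : gauge S x ∈ closure A :=
    gauge_eq ▸ csInf_mem_closure A_nonempty ⟨0, fun _ hr => hr.1.le⟩
  have continuousAt_inv_smul : ContinuousAt (fun r : ℝ => r⁻¹ • x) (gauge S x) :=
    (continuousAt_inv₀ hx.ne').smul continuousAt_const
  exact hS.closure_subset <|
    continuousAt_inv_smul.continuousWithinAt.mem_closure gauge_mem_closure fun _ hr => hr.2

lemma exists_one_lt_smul_mem_of_mem_interior {U : Set E} {x : E} (hx : x ∈ interior U) :
    ∃ t : ℝ, 1 < t ∧ t • x ∈ U := by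
  have tendsto_smul : Tendsto (fun t : ℝ => t • x) (𝓝 1) (𝓝 x) :=
    (continuous_id.smul continuous_const).tendsto' 1 x (one_smul ℝ x)
  have eventually_mem : ∀ᶠ t : ℝ in 𝓝[>] 1, t • x ∈ U :=
    (tendsto_smul.mono_left nhdsWithin_le_nhds).eventually_mem (mem_interior_iff_mem_nhds.1 hx)
  exact (eventually_mem_nhdsWithin.and eventually_mem).exists

theorem exists_gauge_map_lt_of_subset_interior_iUnion_preimage {ι : Sort*} {f : ι → E →ₗ[ℝ] F}
    {S : Set E} {T : Set F} (hS : IsClosed S) (hST : S ⊆ interior (⋃ i, f i ⁻¹' T))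
    {x : E} (hx : 0 < gauge S x) : ∃ i, gauge T (f i x) < gauge S x := by
  obtain ⟨t, one_lt_t, smul_mem⟩ :=
    exists_one_lt_smul_mem_of_mem_interior (hST (inv_gauge_smul_mem hS hx))
  obtain ⟨i, image_mem⟩ := mem_iUnion.1 smul_mem
  have t_pos : 0 < t := one_pos.trans one_lt_t
  refine ⟨i, ?_⟩
  calc gauge T (f i x) ≤ gauge S x / t := by
        refine gauge_le_of_mem (div_pos hx t_pos).le ?_
        rw [mem_smul_set_iff_inv_smul_mem₀ (div_pos hx t_pos).ne', inv_div, div_eq_mul_inv,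
          mul_smul, ← map_smul, ← map_smul]
        exact image_mem
    _ < gauge S x := div_lt_self hx one_lt_t

end Gauge

section Ellipsoid

variable {n : ℕ}

lemma gaugeFn_eq_gauge (S : Set (Fin n → ℝ)) (x : Fin n → ℝ) : gaugeFn S x = gauge S x := by
  rcases S.eq_empty_or_nonempty with rfl | S_nonempty
  · simp [gaugeFn]
  rcases eq_or_ne x 0 with rfl | x_ne_zero
  · have zero_isLeast : IsLeast {α : ℝ | 0 ≤ α ∧ (0 : Fin n → ℝ) ∈ α • S} 0 :=
      ⟨⟨le_rfl, by simp [zero_smul_set S_nonempty]⟩, fun _ hα => hα.1⟩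
    rw [gauge_zero, gaugeFn, zero_isLeast.csInf_eq]
  · have pos_of_mem {α : ℝ} (hα : 0 ≤ α) (hx : x ∈ α • S) : 0 < α :=
      hα.lt_of_ne' fun h => x_ne_zero (by simpa [h, zero_smul_set S_nonempty] using hx)
    exact congrArg sInf (Set.ext fun α =>
      ⟨fun hα => ⟨pos_of_mem hα.1 hα.2, hα.2⟩, fun hα => ⟨hα.1.le, hα.2⟩⟩)

variable (M : Matrix (Fin n) (Fin n) ℝ)

lemma quadForm_smul (t : ℝ) (x : Fin n → ℝ) : quadForm M (t • x) = t ^ 2 * quadForm M x := by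
  simp only [quadForm, mulVec_smul, smul_dotProduct, dotProduct_smul, smul_eq_mul]
  ring

lemma quadForm_transpose_mul_mul (L : Matrix (Fin n) (Fin n) ℝ) (x : Fin n → ℝ) :
    quadForm (Lᵀ * M * L) x = quadForm M (L *ᵥ x) := by
  simp only [quadForm, ← mulVec_mulVec]
  rw [dotProduct_mulVec, vecMul_transpose]

lemma ellipsoid_transpose_mul_mul (L : Matrix (Fin n) (Fin n) ℝ) :
    ellipsoid (Lᵀ * M * L) = L.mulVecLin ⁻¹' ellipsoid M := by
  ext x
  change quadForm (Lᵀ * M * L) x ≤ 1 ↔ quadForm M (L *ᵥ x) ≤ 1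
  rw [quadForm_transpose_mul_mul]

lemma isClosed_ellipsoid : IsClosed (ellipsoid M) := by
  have continuous_quadForm : Continuous (quadForm M) := by
    unfold quadForm
    fun_prop
  exact isClosed_le continuous_quadForm continuous_const

lemma mem_smul_ellipsoid_iff {r : ℝ} (hr : 0 < r) (x : Fin n → ℝ) :
    x ∈ r • ellipsoid M ↔ √(quadForm M x) ≤ r := by
  rw [mem_smul_set_iff_inv_smul_mem₀ hr.ne', Real.sqrt_le_left hr.le]
  change quadForm M (r⁻¹ • x) ≤ 1 ↔ _
  rw [quadForm_smul, inv_pow, inv_mul_le_one₀ (pow_pos hr 2)]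

lemma gauge_ellipsoid (x : Fin n → ℝ) : gauge (ellipsoid M) x = √(quadForm M x) := by
  refine le_antisymm (le_of_forall_gt_imp_ge_of_dense fun r hr => ?_) ?_
  · have r_pos : 0 < r := (Real.sqrt_nonneg _).trans_lt hr
    exact gauge_le_of_mem r_pos.le ((mem_smul_ellipsoid_iff M r_pos x).2 hr.le)
  · have sqrt_add_one_pos : 0 < √(quadForm M x) + 1 := by positivity
    refine le_csInf ⟨_, sqrt_add_one_pos, ?_⟩ fun r hr => (mem_smul_ellipsoid_iff M hr.1 x).1 hr.2
    exact (mem_smul_ellipsoid_iff M sqrt_add_one_pos x).2 (le_add_of_nonneg_right zero_le_one)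

variable {M}

lemma gauge_ellipsoid_lt_gauge_ellipsoid_iff {x y : Fin n → ℝ} (hy : 0 < quadForm M y) :
    gauge (ellipsoid M) x < gauge (ellipsoid M) y ↔ quadForm M x < quadForm M y := by
  rw [gauge_ellipsoid, gauge_ellipsoid, Real.sqrt_lt_sqrt_iff_of_pos hy]

theorem exists_quadForm_mulVec_lt {Γ : Set (Matrix (Fin n) (Fin n) ℝ)}
    (hadm : ellipsoid M ⊆ interior (⋃ Λ ∈ Γ, ellipsoid (Λᵀ * M * Λ)))
    {x : Fin n → ℝ} (hx : 0 < quadForm M x) :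
    ∃ Λ ∈ Γ, quadForm M (Λ *ᵥ x) < quadForm M x := by
  have gauge_pos : 0 < gauge (ellipsoid M) x := by
    rw [gauge_ellipsoid]
    exact Real.sqrt_pos.2 hx
  simp only [ellipsoid_transpose_mul_mul, biUnion_eq_iUnion] at hadm
  obtain ⟨Λ, gauge_lt⟩ := exists_gauge_map_lt_of_subset_interior_iUnion_preimage
    (isClosed_ellipsoid M) hadm gauge_pos
  exact ⟨Λ, Λ.2, (gauge_ellipsoid_lt_gauge_ellipsoid_iff hx).1 gauge_lt⟩

theorem stmt9_general {Γ : Set (Matrix (Fin n) (Fin n) ℝ)}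
    (hadm : ellipsoid M ⊆ interior (⋃ Λ ∈ Γ, ellipsoid (Λᵀ * M * Λ)))
    {x₀ : Fin n → ℝ} (hx₀ : 0 < quadForm M x₀) {Λs : Matrix (Fin n) (Fin n) ℝ}
    (hmin : ∀ Λ ∈ Γ, quadForm (Λsᵀ * M * Λs) x₀ ≤ quadForm (Λᵀ * M * Λ) x₀) :
    gaugeFn (ellipsoid M) (Λs *ᵥ x₀) < gaugeFn (ellipsoid M) x₀ ∧
    quadForm M (Λs *ᵥ x₀) < quadForm M x₀ := by
  simp only [quadForm_transpose_mul_mul] at hmin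
  obtain ⟨Λ, hΛ, quadForm_lt⟩ := exists_quadForm_mulVec_lt hadm hx₀
  have quadForm_min_lt := (hmin Λ hΛ).trans_lt quadForm_lt
  simp only [gaugeFn_eq_gauge]
  exact ⟨(gauge_ellipsoid_lt_gauge_ellipsoid_iff hx₀).2 quadForm_min_lt, quadForm_min_lt⟩

end Ellipsoid

/-- Lemma C.2, item 2: if Γ is admissible, x₀ ≠ 0 and Λ* minimizes
x₀ᵀM_Λx₀ over Λ ∈ Γ, then Ψ(Λ*x₀; S₀) < Ψ(x₀; S₀); equivalently
(Λ*x₀)ᵀM₀(Λ*x₀) < x₀ᵀM₀x₀. -/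
theorem stmt9 {n : ℕ} (hn : 0 < n)
    (M₀ : Matrix (Fin n) (Fin n) ℝ) (hM₀ : M₀.PosDef)
    (Γ : Finset (Matrix (Fin n) (Fin n) ℝ)) (hΓ : Γ.Nonempty)
    (hinv : ∀ Λ ∈ Γ, IsUnit Λ.det)
    (hadm : ellipsoid M₀ ⊆ interior (SStar M₀ Γ))
    (x₀ : Fin n → ℝ) (hx₀ : x₀ ≠ 0)
    (Λs : Matrix (Fin n) (Fin n) ℝ) (hΛs : Λs ∈ Γ)
    (hmin : ∀ Λ ∈ Γ, quadForm (Λsᵀ * M₀ * Λs) x₀ ≤ quadForm (Λᵀ * M₀ * Λ) x₀) :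
    gaugeFn (ellipsoid M₀) (Λs.mulVec x₀) < gaugeFn (ellipsoid M₀) x₀ ∧
    quadForm M₀ (Λs.mulVec x₀) < quadForm M₀ x₀ := by
  exact stmt9_general hadm (hM₀.dotProduct_mulVec_pos hx₀) hmin
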